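/- arXiv:2304.04373 — 2 statements merged into one kernel-verified Lean document; each statement's English description precedes it below -/
import Mathlib

section
/- Let 0 < b < ∞, 1 < p < q < ∞ with p' = p/(p−1), and let w(x) = 2e^{-1/x²}/x³ on (0,b]. Then sup_{0<x<b} { (∫_0^x w(t) dt)^{1/q} · (∫_x^b (∫_t^b w(s) ds)^{p'} · w(t)^{1−p'} dt)^{1/p'} } = ∞; in fact the quantity (∫_0^x w)^{1/q} · (∫_x^b (∫_t^b w)^{p'} w(t)^{1−p'} dt)^{1/p'} tends to ∞ as x → 0⁺. In particular, the Chua–Wheeden constant K_{p,q}(w,w,w) on [0,b] is infinite, so the (q,p) weighted Poincaré inequality fails for this weight for every q > p. -/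
open MeasureTheory Set Filter
open scoped ENNReal NNReal

noncomputable section

/-- A Young function: even, convex, vanishing at `0`, nonnegative, tending to `∞`. -/
def IsYoung (Φ : ℝ → ℝ) : Prop :=
  ConvexOn ℝ Set.univ Φ ∧ (∀ t, Φ (-t) = Φ t) ∧ Φ 0 = 0 ∧ (∀ t, 0 ≤ Φ t) ∧
    Filter.Tendsto Φ Filter.atTop Filter.atTop

/-- A weight on `[a,b]`: nonnegative, measurable, positive a.e. on `[a,b]`. -/
def IsWeight (w : ℝ → ℝ) (a b : ℝ) : Prop :=
  Measurable w ∧ (∀ x, 0 ≤ w x) ∧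
    ∀ᵐ x ∂(MeasureTheory.volume.restrict (Set.Icc a b)), 0 < w x

/-- `Φ` is submultiplicative on `[0,∞)`. -/
def Submult (Φ : ℝ → ℝ) : Prop :=
  ∀ s t : ℝ, 0 ≤ s → 0 ≤ t → Φ (s * t) ≤ Φ s * Φ t

/-- `Φinv` is the inverse of `Φ` restricted to `[0,∞)`. -/
def IsYoungInv (Φ Φinv : ℝ → ℝ) : Prop :=
  (∀ t, 0 ≤ t → 0 ≤ Φinv t) ∧ (∀ t, 0 ≤ t → Φ (Φinv t) = t) ∧
    (∀ t, 0 ≤ t → Φinv (Φ t) = t)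

/-- `μ[x,y] := ∫ₓ^y μ(t) dt`, as an extended nonnegative real. -/
def wInt (μ : ℝ → ℝ) (x y : ℝ) : ℝ≥0∞ :=
  ∫⁻ t in Set.Icc x y, ENNReal.ofReal (μ t)

/-- The Luxemburg (gauge) norm of `f` on `[a,b]` w.r.t. the Young function `Φ`
and the weight `μ`: `inf {k > 0 : ∫ₐ^b Φ(f/k) μ ≤ 1}` (`∞` if no such `k`). -/
def luxNorm (Φ μ : ℝ → ℝ) (a b : ℝ) (f : ℝ → ℝ) : ℝ≥0∞ :=
  sInf {k : ℝ≥0∞ | ∃ c : ℝ, 0 < c ∧ k = ENNReal.ofReal c ∧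
    (∫⁻ x in Set.Icc a b, ENNReal.ofReal (Φ (f x / c) * μ x)) ≤ 1}

/-- `f` is Lipschitz on `[a,b]` and `f'` is a.e. its derivative on `(a,b)`. -/
def LipschitzWithDeriv (f f' : ℝ → ℝ) (a b : ℝ) : Prop :=
  (∃ K, LipschitzOnWith K f (Set.Icc a b)) ∧
    ∀ᵐ x ∂(MeasureTheory.volume.restrict (Set.Ioo a b)), HasDerivAt f (f' x) x

/-- The weighted `L^p` norm `(∫ₐ^b |g|^p w)^{1/p}`, as an extended nonnegative real. -/
def lpNorm (w : ℝ → ℝ) (p a b : ℝ) (g : ℝ → ℝ) : ℝ≥0∞ :=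
  (∫⁻ t in Set.Icc a b, ENNReal.ofReal (|g t| ^ p * w t)) ^ (1 / p)

/-- The Luxemburg (gauge) norm on a general measure space. -/
def luxNormGen {Ω : Type*} [MeasurableSpace Ω] (Φ : ℝ → ℝ) (μ : Measure Ω)
    (f : Ω → ℝ) : ℝ≥0∞ :=
  sInf {k : ℝ≥0∞ | ∃ c : ℝ, 0 < c ∧ k = ENNReal.ofReal c ∧
    (∫⁻ x, ENNReal.ofReal (Φ (f x / c)) ∂μ) ≤ 1}

/-- The Luxemburg (gauge) norm for an extended-real-valued Young function. -/
def luxNormE {Ω : Type*} [MeasurableSpace Ω] (Ψ : ℝ → ℝ≥0∞) (μ : Measure Ω)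
    (f : Ω → ℝ) : ℝ≥0∞ :=
  sInf {k : ℝ≥0∞ | ∃ c : ℝ, 0 < c ∧ k = ENNReal.ofReal c ∧
    (∫⁻ x, Ψ (f x / c) ∂μ) ≤ 1}

lemma dw_hasDeriv (x : ℝ) (hx : 0 < x) :
    HasDerivAt (fun x : ℝ => Real.exp (-(1 / x ^ 2))) (2 * Real.exp (-(1 / x ^ 2)) / x ^ 3) x := by
  have h0 : x ^ 2 ≠ 0 := by positivity
  have h1 : HasDerivAt (fun x : ℝ => x ^ 2) (2 * x) x := by
    simpa using hasDerivAt_pow 2 x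
  have h2 := ((h1.fun_inv h0).fun_neg).exp
  simp only [one_div]
  refine h2.congr_deriv ?_
  field_simp

lemma dw_wInt (s t : ℝ) (hs : 0 < s) (hst : s ≤ t) :
    wInt (fun x => 2 * Real.exp (-(1 / x ^ 2)) / x ^ 3) s t =
      ENNReal.ofReal (Real.exp (-(1 / t ^ 2)) - Real.exp (-(1 / s ^ 2))) := by
  have hc : ContinuousOn (fun x : ℝ => 2 * Real.exp (-(1 / x ^ 2)) / x ^ 3) (Icc s t) := by
    intro x hx
    have hx0 : 0 < x := lt_of_lt_of_le hs hx.1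
    have h2 : x ^ 2 ≠ 0 := by positivity
    have h3 : x ^ 3 ≠ 0 := by positivity
    apply ContinuousAt.continuousWithinAt
    fun_prop (disch := assumption)
  have hi : IntervalIntegrable (fun x : ℝ => 2 * Real.exp (-(1 / x ^ 2)) / x ^ 3) volume s t := by
    apply ContinuousOn.intervalIntegrable
    rwa [uIcc_of_le hst]
  have h := intervalIntegral.integral_eq_sub_of_hasDerivAt (a := s) (b := t)
    (f := fun x : ℝ => Real.exp (-(1 / x ^ 2)))
    (f' := fun x : ℝ => 2 * Real.exp (-(1 / x ^ 2)) / x ^ 3) (by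
      intro x hx
      rw [uIcc_of_le hst] at hx
      exact dw_hasDeriv x (lt_of_lt_of_le hs hx.1)) hi
  rw [wInt, ← h, intervalIntegral.integral_of_le hst, ← integral_Icc_eq_integral_Ioc]
  rw [ofReal_integral_eq_lintegral_ofReal hc.integrableOn_Icc]
  filter_upwards [ae_restrict_mem measurableSet_Icc] with x hx
  have hx0 : 0 < x := lt_of_lt_of_le hs hx.1
  simp only [Pi.zero_apply]
  positivity

lemma dw_mono (s t : ℝ) (hs : 0 < s) (hst : s ≤ t) :
    Real.exp (-(1 / s ^ 2)) ≤ Real.exp (-(1 / t ^ 2)) := by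
  apply Real.exp_le_exp.2
  apply neg_le_neg
  gcongr

lemma dw_left (x : ℝ) (hx : 0 < x) (hx1 : x ≤ 1) :
    ENNReal.ofReal (1 / 2 * Real.exp (-(1 / x ^ 2))) ≤
    wInt (fun x => 2 * Real.exp (-(1 / x ^ 2)) / x ^ 3) 0 x := by
  have h1 : wInt (fun x => 2 * Real.exp (-(1 / x ^ 2)) / x ^ 3) (x / 2) x ≤
      wInt (fun x => 2 * Real.exp (-(1 / x ^ 2)) / x ^ 3) 0 x :=
    lintegral_mono_set (Icc_subset_Icc_left (by positivity))
  refine le_trans ?_ h1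
  rw [dw_wInt _ _ (by positivity) (by linarith)]
  apply ENNReal.ofReal_le_ofReal
  have h2 : Real.exp (-(1 / (x / 2) ^ 2)) = Real.exp (-(1 / x ^ 2)) * Real.exp (-(3 / x ^ 2)) := by
    rw [← Real.exp_add]
    congr 1
    field_simp
    norm_num
  have h3 : Real.exp (-(3 / x ^ 2)) ≤ 1 / 2 := by
    have h4 : (1 : ℝ) ≤ 3 / x ^ 2 := by
      rw [le_div_iff₀ (by positivity)]
      nlinarith
    have h5 := Real.add_one_le_exp (3 / x ^ 2)
    rw [Real.exp_neg, one_div]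
    apply inv_anti₀ <;> linarith
  rw [h2]
  nlinarith [Real.exp_pos (-(1 / x ^ 2))]

lemma dw_right (b pc x : ℝ) (hb : 0 < b) (hpc : 1 < pc) (hx : 0 < x) (hx1 : x ≤ 1)
    (hxb : x ≤ b / 4) :
    ENNReal.ofReal ((Real.exp (-(1 / b ^ 2)) - Real.exp (-(1 / (b / 2) ^ 2))) ^ pc *
      (2 * Real.exp 2 * Real.exp (-(1 / x ^ 2)) / x ^ 3) ^ (1 - pc) * x ^ 3) ≤
    ∫⁻ t in Set.Icc x b, ENNReal.ofReal
      ((wInt (fun x => 2 * Real.exp (-(1 / x ^ 2)) / x ^ 3) t b).toReal ^ pc *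
        (2 * Real.exp (-(1 / t ^ 2)) / t ^ 3) ^ (1 - pc)) := by
  have hx3 : x ^ 3 ≤ x := by nlinarith [mul_pos hx hx]
  have hx3' : 0 < x ^ 3 := by positivity
  have hc0 : 0 ≤ Real.exp (-(1 / b ^ 2)) - Real.exp (-(1 / (b / 2) ^ 2)) :=
    sub_nonneg.2 (dw_mono _ _ (by positivity) (by linarith))
  have hsub : Icc x (x + x ^ 3) ⊆ Icc x b := Icc_subset_Icc_right (by linarith)
  refine le_trans ?_ (lintegral_mono_set hsub)
  rw [ENNReal.ofReal_mul (by positivity)]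
  have hv : ENNReal.ofReal (x ^ 3) = volume (Icc x (x + x ^ 3)) := by
    rw [Real.volume_Icc]; congr 1; ring
  rw [hv, ← setLIntegral_const]
  apply setLIntegral_mono' measurableSet_Icc
  intro t ht
  have ht0 : 0 < t := lt_of_lt_of_le hx ht.1
  apply ENNReal.ofReal_le_ofReal
  rw [dw_wInt t b ht0 (by linarith [ht.2]), ENNReal.toReal_ofReal
    (sub_nonneg.2 (dw_mono _ _ ht0 (by linarith [ht.2])))]
  have e1 : Real.exp (-(1 / t ^ 2)) ≤ Real.exp (-(1 / (b / 2) ^ 2)) :=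
    dw_mono _ _ ht0 (by linarith [ht.2])
  have e2 : Real.exp (-(1 / t ^ 2)) ≤ Real.exp 2 * Real.exp (-(1 / x ^ 2)) := by
    rw [← Real.exp_add]
    apply Real.exp_le_exp.2
    have : 1 / x ^ 2 - 1 / t ^ 2 ≤ 2 := by
      rw [div_sub_div _ _ (by positivity) (by positivity), div_le_iff₀ (by positivity)]
      have k1 : t - x ≤ x ^ 3 := by linarith [ht.2]
      have k2 : (t - x) * (t + x) ≤ x ^ 3 * (2 * t) :=
        mul_le_mul k1 (by linarith [ht.1]) (by linarith) (by positivity)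
      have k3 : x ^ 2 * t * x ≤ x ^ 2 * t * t :=
        mul_le_mul_of_nonneg_left ht.1 (by positivity)
      nlinarith
    linarith
  apply mul_le_mul
  · exact Real.rpow_le_rpow hc0 (by linarith) (by linarith)
  · apply Real.rpow_le_rpow_of_nonpos (by positivity) _ (by linarith)
    have : x ≤ t := ht.1
    rw [mul_assoc]
    gcongr
  · positivity
  · apply Real.rpow_nonneg
    linarith

lemma dw_alg (c p q pc x : ℝ) (hc : 0 < c) (hp : 1 < p) (hpc : pc = p / (p - 1)) (hx : 0 < x) :
    (1 / 2 * Real.exp (-(1 / x ^ 2))) ^ (1 / q) *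
    (c ^ pc * (2 * Real.exp 2 * Real.exp (-(1 / x ^ 2)) / x ^ 3) ^ (1 - pc) * x ^ 3) ^ (1 / pc) =
    ((1 / 2 : ℝ) ^ (1 / q) * c * (2 * Real.exp 2) ^ (-(1 / p))) *
      (x ^ 3 * Real.exp ((1 / p - 1 / q) * (1 / x ^ 2))) := by
  have hp1 : p - 1 ≠ 0 := by linarith
  have hp0 : p ≠ 0 := by linarith
  have hpc0 : pc ≠ 0 := by rw [hpc]; exact div_ne_zero hp0 hp1
  have e1 : (1 - pc) * (1 / pc) = -(1 / p) := by rw [hpc]; field_simp; ring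
  have e2 : 1 / pc = 1 - 1 / p := by rw [hpc]; field_simp
  have e3 : pc * (1 / pc) = 1 := by field_simp
  have e5 : (2 * Real.exp 2 * Real.exp (-(1 / x ^ 2)) / x ^ 3) ^ (-(1 / p)) =
      (2 * Real.exp 2) ^ (-(1 / p)) * Real.exp (-(1 / x ^ 2) * -(1 / p)) * (x ^ 3) ^ (1 / p) := by
    rw [Real.div_rpow (by positivity) (by positivity),
      Real.mul_rpow (x := 2 * Real.exp 2) (by positivity) (by positivity), ← Real.exp_mul,
      Real.rpow_neg (x := x ^ 3) (by positivity), div_inv_eq_mul]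
  have e6 : (1 / 2 * Real.exp (-(1 / x ^ 2))) ^ (1 / q) =
      (1 / 2 : ℝ) ^ (1 / q) * Real.exp (-(1 / x ^ 2) * (1 / q)) := by
    rw [Real.mul_rpow (by positivity) (by positivity), ← Real.exp_mul]
  rw [e6, Real.mul_rpow (by positivity) (by positivity),
    Real.mul_rpow (by positivity) (by positivity), ← Real.rpow_mul hc.le,
    ← Real.rpow_mul (by positivity), e1, e3, e2, Real.rpow_one,
    e5, Real.rpow_sub (by positivity), Real.rpow_one]
  have e4 : Real.exp ((1 / p - 1 / q) * (1 / x ^ 2)) =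
      Real.exp (-(1 / x ^ 2) * (1 / q)) * Real.exp (-(1 / x ^ 2) * -(1 / p)) := by
    rw [← Real.exp_add]; congr 1; ring
  rw [e4]
  have : (x ^ 3) ^ (1 / p) ≠ 0 := by positivity
  field_simp

lemma dw_tend (a : ℝ) (ha : 0 < a) :
    Tendsto (fun x : ℝ => x ^ 3 * Real.exp (a * (1 / x ^ 2))) (nhdsWithin 0 (Ioi 0)) atTop := by
  have h : Tendsto (fun x : ℝ => a ^ 2 / 2 * x⁻¹) (nhdsWithin 0 (Ioi 0)) atTop :=
    tendsto_inv_nhdsGT_zero.const_mul_atTop (by positivity)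
  refine tendsto_atTop_mono' _ ?_ h
  filter_upwards [self_mem_nhdsWithin] with x hx
  have hx : 0 < x := hx
  have h1 := Real.quadratic_le_exp_of_nonneg (x := a * (1 / x ^ 2)) (by positivity)
  have h2 : (a * (1 / x ^ 2)) ^ 2 / 2 ≤ Real.exp (a * (1 / x ^ 2)) := by
    have : 0 < a * (1 / x ^ 2) := by positivity
    linarith
  calc a ^ 2 / 2 * x⁻¹ = x ^ 3 * ((a * (1 / x ^ 2)) ^ 2 / 2) := by field_simp
    _ ≤ _ := by gcongr

/-- For the weight `w(x) = 2e^{-1/x²}/x³` on `(0,b]` and any `q > p`, the second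
quantity in the Chua–Wheeden constant `K_{p,q}(w,w,w)` blows up as `x → 0⁺`;
in particular its supremum over `0 < x < b` is infinite. -/
theorem degenerate_weight_Kpq_infinite
    (b p q pc : ℝ) (hb : 0 < b) (hp : 1 < p) (hq : p < q) (hpc : pc = p / (p - 1))
    (w : ℝ → ℝ) (hw : w = fun x => 2 * Real.exp (-(1 / x ^ 2)) / x ^ 3) :
    Filter.Tendsto
      (fun x => (wInt w 0 x) ^ (1 / q) *
        (∫⁻ t in Set.Icc x b,
          ENNReal.ofReal ((wInt w t b).toReal ^ pc * w t ^ (1 - pc))) ^ (1 / pc))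
      (nhdsWithin 0 (Set.Ioi 0)) (nhds ⊤) ∧
    (⨆ x ∈ Set.Ioo (0:ℝ) b,
        (wInt w 0 x) ^ (1 / q) *
          (∫⁻ t in Set.Icc x b,
            ENNReal.ofReal ((wInt w t b).toReal ^ pc * w t ^ (1 - pc))) ^ (1 / pc)) = ⊤ := by
  subst hw
  have hp0 : 0 < p := by linarith
  have hq0 : 0 < q := by linarith
  have hpc1 : 1 < pc := by
    rw [hpc, lt_div_iff₀ (by linarith)]; linarith
  have hpc0 : 0 < pc := by linarith
  have hc : 0 < Real.exp (-(1 / b ^ 2)) - Real.exp (-(1 / (b / 2) ^ 2)) := by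
    apply sub_pos.2
    apply Real.exp_lt_exp.2
    apply neg_lt_neg
    apply one_div_lt_one_div_of_lt (by positivity)
    nlinarith
  set c := Real.exp (-(1 / b ^ 2)) - Real.exp (-(1 / (b / 2) ^ 2)) with hcdef
  have ha : 0 < 1 / p - 1 / q := sub_pos.2 (one_div_lt_one_div_of_lt hp0 hq)
  have hT : Filter.Tendsto
      (fun x => (wInt (fun x => 2 * Real.exp (-(1 / x ^ 2)) / x ^ 3) 0 x) ^ (1 / q) *
        (∫⁻ t in Set.Icc x b,
          ENNReal.ofReal ((wInt (fun x => 2 * Real.exp (-(1 / x ^ 2)) / x ^ 3) t b).toReal ^ pc *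
            (2 * Real.exp (-(1 / t ^ 2)) / t ^ 3) ^ (1 - pc))) ^ (1 / pc))
      (nhdsWithin 0 (Set.Ioi 0)) (nhds ⊤) := by
    have h1 := ENNReal.tendsto_ofReal_atTop.comp ((dw_tend _ ha).const_mul_atTop
      (show 0 < (1 / 2 : ℝ) ^ (1 / q) * c * (2 * Real.exp 2) ^ (-(1 / p)) by positivity))
    refine tendsto_of_tendsto_of_tendsto_of_le_of_le' h1 tendsto_const_nhds ?_
      (Eventually.of_forall fun _ => le_top)
    have hm : Ioo (0 : ℝ) (min 1 (b / 4)) ∈ nhdsWithin (0 : ℝ) (Ioi 0) :=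
      Ioo_mem_nhdsGT (by positivity)
    filter_upwards [hm] with x hx
    have hx0 : 0 < x := hx.1
    have hx1 : x ≤ 1 := hx.2.le.trans (min_le_left _ _)
    have hxb : x ≤ b / 4 := hx.2.le.trans (min_le_right _ _)
    simp only [Function.comp]
    rw [← dw_alg c p q pc x hc hp hpc hx0, ENNReal.ofReal_mul (by positivity),
      ← ENNReal.ofReal_rpow_of_nonneg (by positivity) (by positivity),
      ← ENNReal.ofReal_rpow_of_nonneg (by positivity) (by positivity)]
    exact mul_le_mul' (ENNReal.rpow_le_rpow (dw_left x hx0 hx1) (by positivity))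
      (ENNReal.rpow_le_rpow (dw_right b pc x hb hpc1 hx0 hx1 hxb) (by positivity))
  refine ⟨hT, top_le_iff.1 (le_of_tendsto hT ?_)⟩
  filter_upwards [Ioo_mem_nhdsGT hb] with x hx
  exact le_iSup₂_of_le x hx le_rfl
end
end

section
/- Let 0 < b < ∞, 1 < p < ∞ with conjugate exponent p' = p/(p−1), and 0 < α < (3/4)p. Let w(x) = 2e^{-1/x²}/x³ on (0,b], and let Φ(t) = |t|^p (ln|t|)^α for |t| ≥ e^{2α} and Φ(t) = |t|^p (2α)^α for |t| < e^{2α}, with inverse Φ^{-1} on [0,∞). Then sup_{0<x<b} { [Φ^{-1}( e^{1/(2x²)} )]^{-2} · (∫_x^b (∫_t^b w(s) ds)^{p'} · w(t)^{1−p'} dt)^{1/p'} } < ∞; that is, the second supremum in the constant K_{p,Φ}(w,w,w) of the sufficient condition for the (Φ,p) Orlicz–Poincaré inequality is finite (note w[0,x]^{-1/2} = e^{1/(2x²)}). -/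
open MeasureTheory Set Filter
open scoped ENNReal NNReal

noncomputable section

/-- Pointwise comparison of `t^3` and `x^3`. -/
lemma aux_cube (b δ : ℝ) (hb : 0 < b) (hδ : 0 < δ) (x t : ℝ) (hx : 0 < x) (hxt : x ≤ t)
    (htb : t ≤ b) :
    t ^ 3 ≤ (1 + b ^ 2 / δ) ^ 3 * x ^ 3 * Real.exp (3 * δ * (1 / x ^ 2 - 1 / t ^ 2)) := by
  have ht : 0 < t := lt_of_lt_of_le hx hxt
  have hs : 0 ≤ 1 / x ^ 2 - 1 / t ^ 2 := by
    rw [sub_nonneg]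
    exact one_div_le_one_div_of_le (by positivity) (by gcongr)
  set s := 1 / x ^ 2 - 1 / t ^ 2 with hsdef
  have h1 : t / x ≤ (t / x) ^ 2 := by
    have : 1 ≤ t / x := by rwa [le_div_iff₀ hx, one_mul]
    nlinarith
  have h2 : (t / x) ^ 2 = 1 + t ^ 2 * s := by
    rw [hsdef]; field_simp; ring
  have h3 : t ^ 2 * s ≤ b ^ 2 * s := by gcongr
  have h4 : 1 + b ^ 2 * s ≤ (1 + b ^ 2 / δ) * (1 + δ * s) := by
    have : (1 + b ^ 2 / δ) * (1 + δ * s) = 1 + b ^ 2 * s + (b ^ 2 / δ + δ * s) := by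
      field_simp; ring
    rw [this]
    have : 0 ≤ b ^ 2 / δ + δ * s := by positivity
    linarith
  have h5 : 1 + δ * s ≤ Real.exp (δ * s) := by
    have := Real.add_one_le_exp (δ * s); linarith
  have h6 : t / x ≤ (1 + b ^ 2 / δ) * Real.exp (δ * s) := by
    have : (1 + b ^ 2 / δ) * (1 + δ * s) ≤ (1 + b ^ 2 / δ) * Real.exp (δ * s) := by gcongr
    linarith
  have h7 : t ≤ (1 + b ^ 2 / δ) * x * Real.exp (δ * s) := by
    rw [div_le_iff₀ hx] at h6; linarith
  calc t ^ 3 ≤ ((1 + b ^ 2 / δ) * x * Real.exp (δ * s)) ^ 3 := by gcongr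
    _ = _ := by
      rw [mul_pow, mul_pow, ← Real.exp_nat_mul]; congr 2; push_cast; ring

/-- The weight is bounded on `(0,b]`. -/
lemma aux_w_le (x : ℝ) (hx : 0 < x) : 2 * Real.exp (-(1 / x ^ 2)) / x ^ 3 ≤ 4 * x := by
  have h := Real.quadratic_le_exp_of_nonneg (x := 1 / x ^ 2) (by positivity)
  rw [Real.exp_neg, div_le_iff₀ (by positivity)]
  have hE := Real.exp_pos (1 / x ^ 2)
  have h1 : 1 / x ^ 4 ≤ 2 * Real.exp (1 / x ^ 2) := by
    have : (1 / x ^ 2) ^ 2 = 1 / x ^ 4 := by field_simp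
    have h0 : 0 < 1 / x ^ 2 := by positivity
    rw [this] at h; linarith
  have h2 : 1 ≤ 2 * Real.exp (1 / x ^ 2) * x ^ 4 := by
    rwa [div_le_iff₀ (by positivity)] at h1
  have : 2 * (Real.exp (1 / x ^ 2))⁻¹ * 1 ≤
      2 * (Real.exp (1 / x ^ 2))⁻¹ * (2 * Real.exp (1 / x ^ 2) * x ^ 4) := by gcongr
  have h3 : 2 * (Real.exp (1 / x ^ 2))⁻¹ * (2 * Real.exp (1 / x ^ 2) * x ^ 4) = 4 * x * x ^ 3 := by
    field_simp; ring
  linarith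

lemma aux_wInt (b t : ℝ) (hb : 0 < b) (ht : 0 < t) :
    (wInt (fun x => 2 * Real.exp (-(1 / x ^ 2)) / x ^ 3) t b).toReal ≤ 4 * b * b := by
  apply ENNReal.toReal_le_of_le_ofReal (by positivity)
  unfold wInt
  calc _ ≤ ∫⁻ s in Set.Icc t b, ENNReal.ofReal (4 * b) := by
        apply setLIntegral_mono measurable_const
        intro s hs
        apply ENNReal.ofReal_le_ofReal
        have hs0 : 0 < s := lt_of_lt_of_le ht hs.1
        have := aux_w_le s hs0
        have := hs.2
        linarith
    _ = ENNReal.ofReal (4 * b) * ENNReal.ofReal (b - t) := by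
        rw [setLIntegral_const, Real.volume_Icc]
    _ ≤ _ := by
        rw [← ENNReal.ofReal_mul (by positivity)]
        apply ENNReal.ofReal_le_ofReal
        gcongr; linarith

/-- Explicit integral. -/
lemma aux_int (a x b : ℝ) (ha : 0 < a) (hx : 0 < x) (hxb : x ≤ b) :
    ∫⁻ t in Set.Icc x b, ENNReal.ofReal (Real.exp (a / t ^ 2) / t ^ 3) ≤
      ENNReal.ofReal (Real.exp (a / x ^ 2) / (2 * a)) := by
  have hcont : ContinuousOn (fun t : ℝ => Real.exp (a / t ^ 2) / t ^ 3) (Set.Icc x b) := by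
    intro t ht
    have ht0 : t ≠ 0 := (lt_of_lt_of_le hx ht.1).ne'
    apply ContinuousAt.continuousWithinAt
    fun_prop (disch := positivity)
  have hint := hcont.integrableOn_Icc (μ := volume)
  rw [← ofReal_integral_eq_lintegral_ofReal hint]
  · apply ENNReal.ofReal_le_ofReal
    rw [integral_Icc_eq_integral_Ioc, ← intervalIntegral.integral_of_le hxb]
    rw [intervalIntegral.integral_eq_sub_of_hasDerivAt
      (f := fun t => - (Real.exp (a / t ^ 2) / (2 * a)))]
    · have : 0 ≤ Real.exp (a / b ^ 2) / (2 * a) := by positivity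
      linarith
    · intro t ht
      rw [uIcc_of_le hxb] at ht
      have ht0 : 0 < t := lt_of_lt_of_le hx ht.1
      have h1 : HasDerivAt (fun t : ℝ => a / t ^ 2) (-(2 * a) / t ^ 3) t := by
        have := ((hasDerivAt_pow 2 t).inv (by positivity)).const_mul a
        refine this.congr_deriv ?_
        simp only [Nat.cast_ofNat, Nat.add_one_sub_one, pow_one]
        field_simp
      have := (h1.exp.div_const (2 * a)).neg
      refine this.congr_deriv ?_
      field_simp
    · rw [intervalIntegrable_iff_integrableOn_Icc_of_le hxb]; exact hint
  · filter_upwards [ae_restrict_mem measurableSet_Icc] with t ht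
    have ht0 : 0 < t := lt_of_lt_of_le hx ht.1
    simp only [Pi.zero_apply]
    positivity

/-- Bound for the inner integral. -/
lemma aux_I (b q : ℝ) (hb : 0 < b) (hq : 1 < q) : ∃ K : ℝ, 0 < K ∧ ∀ x ∈ Set.Ioo (0:ℝ) b,
    (∫⁻ t in Set.Icc x b, ENNReal.ofReal
      ((wInt (fun x => 2 * Real.exp (-(1 / x ^ 2)) / x ^ 3) t b).toReal ^ q *
        (2 * Real.exp (-(1 / t ^ 2)) / t ^ 3) ^ (1 - q))) ≤
      ENNReal.ofReal (K * (x ^ 3) ^ q * Real.exp ((q - 1) / x ^ 2)) := by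
  set a := (q - 1) / 2 with ha
  have ha0 : 0 < a := by rw [ha]; linarith
  have hq0 : 0 < q := by linarith
  set δ := a / (3 * q) with hδ
  have hδ0 : 0 < δ := by positivity
  set C := (1 + b ^ 2 / δ) ^ 3 with hC
  have hC0 : 0 < C := by positivity
  set M := (4 * b * b) ^ q * 2 ^ (1 - q) * C ^ q with hM
  have hM0 : 0 < M := by positivity
  refine ⟨M / (2 * a), by positivity, ?_⟩
  intro x hx
  obtain ⟨hx0, hxb⟩ := hx
  calc _ ≤ ∫⁻ t in Set.Icc x b, ENNReal.ofReal (M * (x ^ 3) ^ q * Real.exp (a / x ^ 2)) *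
          ENNReal.ofReal (Real.exp (a / t ^ 2) / t ^ 3) := by
        apply setLIntegral_mono (by fun_prop)
        intro t ht
        have ht0 : 0 < t := lt_of_lt_of_le hx0 ht.1
        rw [← ENNReal.ofReal_mul (by positivity)]
        apply ENNReal.ofReal_le_ofReal
        have h1 : (wInt (fun x => 2 * Real.exp (-(1 / x ^ 2)) / x ^ 3) t b).toReal ^ q
            ≤ (4 * b * b) ^ q :=
          Real.rpow_le_rpow ENNReal.toReal_nonneg (aux_wInt b t hb ht0) hq0.le
        have h2 : (2 * Real.exp (-(1 / t ^ 2)) / t ^ 3) ^ (1 - q) =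
            2 ^ (1 - q) * Real.exp (2 * a / t ^ 2) * ((t ^ 3) ^ q / t ^ 3) := by
          rw [Real.div_rpow (by positivity) (by positivity),
            Real.mul_rpow (by positivity) (by positivity), ← Real.exp_mul,
            Real.rpow_sub (by positivity : (0:ℝ) < t ^ 3), Real.rpow_one]
          have : -(1 / t ^ 2) * (1 - q) = 2 * a / t ^ 2 := by rw [ha]; field_simp; ring
          rw [this]
          have : 0 < (t ^ 3) ^ q := by positivity
          field_simp
        have h3 : (t ^ 3) ^ q ≤ C ^ q * (x ^ 3) ^ q * Real.exp (a / x ^ 2 - a / t ^ 2) := by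
          calc (t ^ 3) ^ q ≤ (C * x ^ 3 * Real.exp (3 * δ * (1 / x ^ 2 - 1 / t ^ 2))) ^ q :=
                Real.rpow_le_rpow (by positivity)
                  (aux_cube b δ hb hδ0 x t hx0 ht.1 ht.2) hq0.le
            _ = _ := by
                rw [Real.mul_rpow (by positivity) (by positivity),
                  Real.mul_rpow (by positivity) (by positivity), ← Real.exp_mul]
                congr 2
                rw [hδ]; field_simp
        rw [h2]
        have h4 : Real.exp (2 * a / t ^ 2) = Real.exp (a / t ^ 2) * Real.exp (a / t ^ 2) := by
          rw [← Real.exp_add]; congr 1; ring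
        rw [Real.exp_sub] at h3
        calc _ ≤ (4 * b * b) ^ q * (2 ^ (1 - q) * Real.exp (2 * a / t ^ 2) *
              ((C ^ q * (x ^ 3) ^ q * (Real.exp (a / x ^ 2) / Real.exp (a / t ^ 2))) / t ^ 3)) := by
              gcongr
          _ = _ := by
              rw [h4, hM]
              field_simp
    _ = ENNReal.ofReal (M * (x ^ 3) ^ q * Real.exp (a / x ^ 2)) *
          ∫⁻ t in Set.Icc x b, ENNReal.ofReal (Real.exp (a / t ^ 2) / t ^ 3) := by
        rw [lintegral_const_mul]
        fun_prop
    _ ≤ ENNReal.ofReal (M * (x ^ 3) ^ q * Real.exp (a / x ^ 2)) *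
          ENNReal.ofReal (Real.exp (a / x ^ 2) / (2 * a)) := by
        gcongr
        exact aux_int a x b ha0 hx0 hxb.le
    _ = _ := by
        rw [← ENNReal.ofReal_mul (by positivity)]
        congr 1
        have : Real.exp ((q - 1) / x ^ 2) = Real.exp (a / x ^ 2) * Real.exp (a / x ^ 2) := by
          rw [← Real.exp_add]; congr 1; rw [ha]; ring
        rw [this]; field_simp

/-- Lower bound for the inverse. -/
lemma aux_inv (b p α : ℝ) (hb : 0 < b) (hp : 1 < p) (hα : 0 < α) (Φ Φinv : ℝ → ℝ)
    (hΦdef : ∀ t, Φ t = if Real.exp (2*α) ≤ |t|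
      then |t| ^ p * (Real.log |t|) ^ α else |t| ^ p * (2*α) ^ α)
    (hinv : IsYoungInv Φ Φinv) : ∃ D : ℝ, 0 < D ∧ ∀ x ∈ Set.Ioo (0:ℝ) b,
      0 < Φinv (Real.exp (1 / (2 * x ^ 2))) ∧
      Real.exp (1 / (2 * x ^ 2)) ≤
        Φinv (Real.exp (1 / (2 * x ^ 2))) ^ p * (D * (1 / x ^ 2)) ^ α := by
  have hp0 : 0 < p := by linarith
  refine ⟨(1 / 2 + |α * Real.log (2 * α)| * b ^ 2) / p + 2 * α * b ^ 2, by positivity, ?_⟩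
  rintro x ⟨hx0, hxb⟩
  set D := (1 / 2 + |α * Real.log (2 * α)| * b ^ 2) / p + 2 * α * b ^ 2 with hD
  set y := Real.exp (1 / (2 * x ^ 2)) with hy
  have hy0 : 0 < y := Real.exp_pos _
  have hs0 := hinv.1 y hy0.le
  have hs := hinv.2.1 y hy0.le
  set s := Φinv y with hsdef
  rw [hΦdef, abs_of_nonneg hs0] at hs
  have hv : 1 ≤ b ^ 2 * (1 / x ^ 2) := by
    rw [mul_one_div, le_div_iff₀ (by positivity), one_mul]; gcongr
  have hv0 : 0 < 1 / x ^ 2 := by positivity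
  have hspos : 0 < s := by
    rcases hs0.lt_or_eq with h | h
    · exact h
    · exfalso
      rw [← h] at hs
      simp [Real.zero_rpow hp0.ne'] at hs
      linarith
  refine ⟨hspos, ?_⟩
  have hDv : D * (1 / x ^ 2) = (1 / 2 * (1 / x ^ 2) +
      |α * Real.log (2 * α)| * (b ^ 2 * (1 / x ^ 2))) / p + 2 * α * (b ^ 2 * (1 / x ^ 2)) := by
    rw [hD]; ring
  have e1 : |α * Real.log (2 * α)| ≤ |α * Real.log (2 * α)| * (b ^ 2 * (1 / x ^ 2)) :=
    le_mul_of_one_le_right (abs_nonneg _) hv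
  have e2 : 2 * α ≤ 2 * α * (b ^ 2 * (1 / x ^ 2)) := le_mul_of_one_le_right (by positivity) hv
  split_ifs at hs with h
  · have hl : 2 * α ≤ Real.log s := by rwa [Real.le_log_iff_exp_le hspos]
    have hl0 : 0 < Real.log s := by linarith
    have hlog : p * Real.log s + α * Real.log (Real.log s) = 1 / 2 * (1 / x ^ 2) := by
      have := congrArg Real.log hs
      rw [Real.log_mul (by positivity) (by positivity), Real.log_rpow hspos,
        Real.log_rpow hl0, hy, Real.log_exp] at this
      rw [this]; field_simp
    have hll : α * Real.log (2 * α) ≤ α * Real.log (Real.log s) := by gcongr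
    have hkey : Real.log s ≤ D * (1 / x ^ 2) := by
      have h5 : Real.log s ≤ (1 / 2 * (1 / x ^ 2) +
          |α * Real.log (2 * α)| * (b ^ 2 * (1 / x ^ 2))) / p := by
        rw [le_div_iff₀ hp0]
        have := neg_abs_le (α * Real.log (2 * α))
        linarith
      rw [hDv]
      linarith
    calc y = s ^ p * Real.log s ^ α := hs.symm
      _ ≤ _ := by gcongr
  · have hkey : 2 * α ≤ D * (1 / x ^ 2) := by
      have : 0 ≤ (1 / 2 * (1 / x ^ 2) +
          |α * Real.log (2 * α)| * (b ^ 2 * (1 / x ^ 2))) / p := by positivity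
      rw [hDv]
      linarith
    calc y = s ^ p * (2 * α) ^ α := hs.symm
      _ ≤ _ := by gcongr

/-- For the weight `w(x) = 2e^{-1/x²}/x³` on `(0,b]` and the bumped power Young function
`Φ(t) = |t|^p (ln|t|)^α` (for `|t| ≥ e^{2α}`; `= |t|^p (2α)^α` otherwise) with
`0 < α < (3/4)p`, the second supremum in `K_{p,Φ}(w,w,w)` is finite
(note `w[0,x]^{-1/2} = e^{1/(2x²)}`). -/
theorem degenerate_weight_KpPhi_finite
    (b p pc α : ℝ) (hb : 0 < b) (hp : 1 < p) (hpc : pc = p / (p - 1))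
    (hα : 0 < α) (hαp : α < 3/4 * p)
    (w Φ Φinv : ℝ → ℝ)
    (hw : w = fun x => 2 * Real.exp (-(1 / x ^ 2)) / x ^ 3)
    (hΦdef : ∀ t, Φ t = if Real.exp (2*α) ≤ |t|
      then |t| ^ p * (Real.log |t|) ^ α else |t| ^ p * (2*α) ^ α)
    (hinv : IsYoungInv Φ Φinv) :
    (⨆ x ∈ Set.Ioo (0:ℝ) b,
        ((ENNReal.ofReal (Φinv (Real.exp (1 / (2 * x ^ 2))))) ^ 2)⁻¹ *
          (∫⁻ t in Set.Icc x b,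
            ENNReal.ofReal ((wInt w t b).toReal ^ pc * w t ^ (1 - pc))) ^ (1 / pc)) < ⊤ := by
  have hp0 : 0 < p := by linarith
  have hq : 1 < pc := by rw [hpc, lt_div_iff₀ (by linarith)]; linarith
  have hq0 : 0 < pc := by linarith
  obtain ⟨K, hK, hI⟩ := aux_I b pc hb hq
  obtain ⟨D, hD, hS⟩ := aux_inv b p α hb hp hα Φ Φinv hΦdef hinv
  have hβ : 0 < 3 - 4 * α / p := by
    rw [sub_pos, div_lt_iff₀ hp0]; linarith
  refine lt_of_le_of_lt (b := ENNReal.ofReal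
    (K ^ (1 / pc) * D ^ (2 * α / p) * b ^ (3 - 4 * α / p))) ?_ ENNReal.ofReal_lt_top
  refine iSup₂_le fun x hx => ?_
  have hIx := hI x hx
  obtain ⟨hs, hSx⟩ := hS x hx
  obtain ⟨hx0, hxb⟩ := hx
  subst hw
  set s := Φinv (Real.exp (1 / (2 * x ^ 2))) with hsdef
  calc _ ≤ ((ENNReal.ofReal s) ^ 2)⁻¹ *
        (ENNReal.ofReal (K * (x ^ 3) ^ pc * Real.exp ((pc - 1) / x ^ 2))) ^ (1 / pc) := by
        gcongr
    _ = ENNReal.ofReal ((s ^ 2)⁻¹ *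
        (K * (x ^ 3) ^ pc * Real.exp ((pc - 1) / x ^ 2)) ^ (1 / pc)) := by
        rw [ENNReal.ofReal_rpow_of_pos (by positivity), ← ENNReal.ofReal_pow hs.le,
          ← ENNReal.ofReal_inv_of_pos (by positivity), ← ENNReal.ofReal_mul (by positivity)]
    _ ≤ _ := by
        apply ENNReal.ofReal_le_ofReal
        have h1 : (K * (x ^ 3) ^ pc * Real.exp ((pc - 1) / x ^ 2)) ^ (1 / pc) =
            K ^ (1 / pc) * x ^ 3 * Real.exp (1 / (p * x ^ 2)) := by
          rw [Real.mul_rpow (by positivity) (by positivity),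
            Real.mul_rpow (by positivity) (by positivity), ← Real.rpow_mul (by positivity),
            mul_one_div_cancel hq0.ne', Real.rpow_one, ← Real.exp_mul]
          congr 2
          have : p - 1 ≠ 0 := by linarith
          rw [hpc]; field_simp; ring
        have h2 : Real.exp (1 / (p * x ^ 2)) ≤ s ^ 2 * (D * (1 / x ^ 2)) ^ (2 * α / p) := by
          have := Real.rpow_le_rpow (by positivity) hSx (by positivity : 0 ≤ 2 / p)
          rw [Real.mul_rpow (by positivity) (by positivity), ← Real.rpow_mul hs.le,
            ← Real.rpow_mul (by positivity), ← Real.exp_mul] at this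
          have e1 : 1 / (2 * x ^ 2) * (2 / p) = 1 / (p * x ^ 2) := by field_simp
          have e2 : p * (2 / p) = (2 : ℕ) := by push_cast; field_simp
          have e3 : α * (2 / p) = 2 * α / p := by ring
          rwa [e1, e2, e3, Real.rpow_natCast] at this
        have h3 : x ^ 3 * (1 / x ^ 2) ^ (2 * α / p) = x ^ (3 - 4 * α / p) := by
          have e1 : (1 / x ^ 2 : ℝ) = x ^ (-2 : ℝ) := by
            rw [Real.rpow_neg hx0.le, one_div]; norm_cast
          have e2 : x ^ 3 = x ^ (3 : ℝ) := by norm_cast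
          rw [e1, e2, ← Real.rpow_mul hx0.le, ← Real.rpow_add hx0]
          congr 1; ring
        rw [h1]
        calc _ ≤ (s ^ 2)⁻¹ * (K ^ (1 / pc) * x ^ 3 *
              (s ^ 2 * (D * (1 / x ^ 2)) ^ (2 * α / p))) := by gcongr
          _ = K ^ (1 / pc) * D ^ (2 * α / p) * (x ^ 3 * (1 / x ^ 2) ^ (2 * α / p)) := by
              rw [Real.mul_rpow hD.le (by positivity)]
              field_simp
          _ ≤ _ := by
              rw [h3]; gcongr
end
end
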